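/- Let (δ_i)_{i∈I} be a nonempty tight family of probability distributions on the nonnegative integers, and let δ be the probability distribution defined by δ(j) := sup_{i∈I} δ_i({x ≥ j}) − sup_{i∈I} δ_i({x ≥ j+1}). Then for every nonnegative integer a, δ({x ≥ a}) = sup_{i∈I} δ_i({x ≥ a}); in particular δ_i({x ≥ a}) ≤ δ({x ≥ a}) for all i ∈ I and all a, so δ is an upper tail bound for the family. -/

import Mathlib

/-- The tail probability `p({x ≥ s})` of a distribution `p` on the nonnegative integers. -/
noncomputable def tailProb (p : ℕ → ℝ) (s : ℕ) : ℝ :=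
  ∑' x : ℕ, if s ≤ x then p x else 0

/-!
Write `S j` for the supremum of the `j`-th tails. Every tail is antitone in `j`, hence so is `S`,
and tightness says that the tails tend to `0` uniformly over the family, that is, `S j → 0`. The
tail of `j ↦ S j - S (j + 1)` is then a telescoping series of nonnegative terms.
-/

open Filter
open scoped Topology

theorem tendsto_iSup_atTop_of_antitone {I ι α : Type*} [Nonempty I] [Preorder ι]
    [ConditionallyCompleteLinearOrder α] [TopologicalSpace α] [OrderTopology α] [DenselyOrdered α]
    [NoMaxOrder α] {f : I → ι → α} {a : α}
    (hf : ∀ i, Antitone (f i)) (hle : ∀ i n, a ≤ f i n) (hunif : ∀ b > a, ∃ n, ∀ i, f i n ≤ b) :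
    Tendsto (fun n => ⨆ i, f i n) atTop (𝓝 a) := by
  have iSup_mem_Icc : ∀ b > a, ∀ᶠ n in atTop, (⨆ i, f i n) ∈ Set.Icc a b := by
    intro b hb
    obtain ⟨m, hm⟩ := hunif b hb
    filter_upwards [eventually_ge_atTop m] with n hmn
    have hfb : ∀ i, f i n ≤ b := fun i => (hf i hmn).trans (hm i)
    have hbdd : BddAbove (Set.range fun i => f i n) := ⟨b, Set.forall_mem_range.2 hfb⟩
    exact ⟨le_ciSup_of_le hbdd (Classical.arbitrary I) (hle _ n), ciSup_le hfb⟩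
  refine tendsto_order.2 ⟨fun c hc => ?_, fun c hc => ?_⟩
  · obtain ⟨b, hb⟩ := exists_gt a
    exact (iSup_mem_Icc b hb).mono fun n hn => hc.trans_le hn.1
  · obtain ⟨b, hab, hbc⟩ := exists_between hc
    exact (iSup_mem_Icc b hab).mono fun n hn => hn.2.trans_lt hbc

theorem hasSum_sub_succ_of_antitone {S : ℕ → ℝ} {l : ℝ} (hS : Antitone S)
    (hlim : Tendsto S atTop (𝓝 l)) : HasSum (fun n => S n - S (n + 1)) (S 0 - l) := by
  rw [hasSum_iff_tendsto_nat_of_nonneg fun n => sub_nonneg.2 (hS n.le_succ)]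
  simpa only [Finset.sum_range_sub'] using hlim.const_sub (S 0)

theorem tailProb_eq_tsum_add (p : ℕ → ℝ) (s : ℕ) : tailProb p s = ∑' x, p (x + s) := by
  have hsupp : Function.support (fun x => if s ≤ x then p x else 0) ⊆ Set.range (· + s) := by
    intro x hx
    have hsx : s ≤ x := by
      by_contra h
      exact hx (if_neg h)
    exact ⟨x - s, Nat.sub_add_cancel hsx⟩
  calc tailProb p s = ∑' x, if s ≤ x + s then p (x + s) else 0 :=
        ((add_left_injective s).tsum_eq hsupp).symm
    _ = ∑' x, p (x + s) := by simp only [Nat.le_add_left, if_true]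

theorem tailProb_zero (p : ℕ → ℝ) : tailProb p 0 = ∑' x, p x :=
  tailProb_eq_tsum_add p 0

theorem tailProb_eq_add_tailProb_succ {p : ℕ → ℝ} (hp : Summable p) (s : ℕ) :
    tailProb p s = p s + tailProb p (s + 1) := by
  simp only [tailProb_eq_tsum_add, ((summable_nat_add_iff s).2 hp).tsum_eq_zero_add, zero_add,
    add_right_comm, add_assoc]

theorem tailProb_nonneg {p : ℕ → ℝ} (hp : ∀ x, 0 ≤ p x) (s : ℕ) : 0 ≤ tailProb p s := by
  rw [tailProb_eq_tsum_add]
  exact tsum_nonneg fun x => hp (x + s)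

theorem antitone_tailProb {p : ℕ → ℝ} (hnn : ∀ x, 0 ≤ p x) (hp : Summable p) :
    Antitone (tailProb p) :=
  antitone_nat_of_succ_le fun s => by
    rw [tailProb_eq_add_tailProb_succ hp s]
    exact le_add_of_nonneg_left (hnn s)

theorem tailProb_sub_succ_of_antitone {S : ℕ → ℝ} (hS : Antitone S)
    (hlim : Tendsto S atTop (𝓝 0)) (a : ℕ) : tailProb (fun j => S j - S (j + 1)) a = S a := by
  have hshift : Antitone fun n => S (n + a) := fun m n hmn => hS (by gcongr)
  have hsum := hasSum_sub_succ_of_antitone hshift ((tendsto_add_atTop_iff_nat a).2 hlim)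
  rw [tailProb_eq_tsum_add]
  simpa only [add_right_comm, zero_add, sub_zero] using hsum.tsum_eq

theorem upperTailBound_tail_eq_sup_general {I : Type*} [Nonempty I] {δ : I → ℕ → ℝ} {C : ℝ}
    (hnn : ∀ i x, 0 ≤ δ i x) (hsum : ∀ i, Summable (δ i)) (hmass : ∀ i, ∑' x, δ i x ≤ C)
    (htight : ∀ ε : ℝ, 0 < ε → ∃ j : ℕ, ∀ i, tailProb (δ i) j ≤ ε) :
    (∀ a : ℕ,
        tailProb (fun j : ℕ => (⨆ i, tailProb (δ i) j) - (⨆ i, tailProb (δ i) (j + 1))) a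
          = ⨆ i, tailProb (δ i) a) ∧
      (∀ i, ∀ a : ℕ,
        tailProb (δ i) a
          ≤ tailProb (fun j : ℕ => (⨆ i, tailProb (δ i) j) - (⨆ i, tailProb (δ i) (j + 1))) a) := by
  have hanti : ∀ i, Antitone (tailProb (δ i)) := fun i => antitone_tailProb (hnn i) (hsum i)
  have hbdd : ∀ a, BddAbove (Set.range fun i => tailProb (δ i) a) := fun a =>
    ⟨C, Set.forall_mem_range.2 fun i =>
      (hanti i a.zero_le).trans ((tailProb_zero (δ i)).trans_le (hmass i))⟩
  have hsup_anti : Antitone fun j => ⨆ i, tailProb (δ i) j := fun s t hst =>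
    ciSup_mono (hbdd s) fun i => hanti i hst
  have hsup_lim : Tendsto (fun j => ⨆ i, tailProb (δ i) j) atTop (𝓝 0) :=
    tendsto_iSup_atTop_of_antitone hanti (fun i => tailProb_nonneg (hnn i)) htight
  have htail := tailProb_sub_succ_of_antitone hsup_anti hsup_lim
  exact ⟨htail, fun i a => (le_ciSup (hbdd a) i).trans_eq (htail a).symm⟩

/-- For a nonempty tight family of probability distributions on ℕ, the distribution
`δ(j) := sup_i δ_i({x ≥ j}) − sup_i δ_i({x ≥ j+1})` satisfies
`δ({x ≥ a}) = sup_i δ_i({x ≥ a})` for every `a`; in particular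
`δ_i({x ≥ a}) ≤ δ({x ≥ a})` for all `i` and `a`, i.e. `δ` is an upper tail bound. -/
theorem upperTailBound_tail_eq_sup {I : Type*} [Nonempty I] (δ : I → ℕ → ℝ)
    (hnn : ∀ i x, 0 ≤ δ i x) (hsum : ∀ i, HasSum (δ i) 1)
    (htight : ∀ ε : ℝ, 0 < ε → ∃ j : ℕ, ∀ i, tailProb (δ i) j ≤ ε) :
    (∀ a : ℕ,
        tailProb (fun j : ℕ => (⨆ i, tailProb (δ i) j) - (⨆ i, tailProb (δ i) (j + 1))) a
          = ⨆ i, tailProb (δ i) a) ∧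
      (∀ i, ∀ a : ℕ,
        tailProb (δ i) a
          ≤ tailProb (fun j : ℕ => (⨆ i, tailProb (δ i) j) - (⨆ i, tailProb (δ i) (j + 1))) a) := by
  exact upperTailBound_tail_eq_sup_general hnn (fun i => (hsum i).summable)
    (fun i => (hsum i).tsum_eq.le) htight
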